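/- Let (G, α) and (H, β) be Hom-groups and f : G → H a morphism of Hom-groups with f(1_G) = 1_H, and assume β is injective. Then ker f = {g ∈ G : f(g) = 1_H} contains 1_G and is closed under the product of G and under the inverse map of G; in particular (ker f, α) is a Hom-subgroup of G. -/

import Mathlib

universe u v w

/-- A Hom-group `(G, α)`: a set with product, unit, twisting map `α` (here `map`)
and inverse, satisfying Hom-associativity, multiplicativity of `α`, Hom-unitality,
the anti-morphism property of the inverse and Hom-invertibility. -/
structure HomGroup (G : Type u) where
  mul : G → G → G
  one : G
  map : G → G
  inv : G → G
  hom_assoc : ∀ g h k : G, mul (map g) (mul h k) = mul (mul g h) (map k)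
  map_mul : ∀ g h : G, map (mul g h) = mul (map g) (map h)
  mul_one : ∀ g : G, mul g one = map g
  one_mul : ∀ g : G, mul one g = map g
  map_one : map one = one
  inv_anti : ∀ g h : G, inv (mul g h) = mul (inv h) (inv g)
  exists_hom_inv : ∀ g : G, ∃ n : ℕ,
    (map)^[n] (mul g (inv g)) = one ∧ (map)^[n] (mul (inv g) g) = one

/-- The set of exponents witnessing Hom-invertibility of `g`; the invertibility
index of `g` is the least element of this set. -/
def HomGroup.invSet {G : Type u} (hg : HomGroup G) (g : G) : Set ℕ :=
  {n : ℕ | (hg.map)^[n] (hg.mul g (hg.inv g)) = hg.one ∧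
    (hg.map)^[n] (hg.mul (hg.inv g) g) = hg.one}

/-!
If `f g = 1`, applying `f` to `αⁿ (g g⁻¹) = 1` gives `βⁿ⁺¹ (f g⁻¹) = 1`, because `1 h = β h`; when
the fibre of `β` over `1` is trivial, `βⁿ⁺¹` can be cancelled. A morphism automatically preserves
the unit: `f 1` is an idempotent fixed by `β`, and comparing the two sides of
`β e (e e⁻¹) = (e e) β e⁻¹` after enough applications of `β` shows that such an `e` is `1`.
-/

/-- A morphism of Hom-groups commutes with the twisting maps and the products. That it preserves
the unit is a consequence, `HomGroup.IsHom.apply_one`, and not part of the definition. -/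
structure HomGroup.IsHom {G : Type u} {H : Type v} (hg : HomGroup G) (hh : HomGroup H)
    (f : G → H) : Prop where
  semiconj : Function.Semiconj f hg.map hh.map
  apply_mul : ∀ g k : G, f (hg.mul g k) = hh.mul (f g) (f k)

namespace HomGroup

section

variable {G : Type u} (hg : HomGroup G)

theorem iterate_map_mul (n : ℕ) (g h : G) :
    hg.map^[n] (hg.mul g h) = hg.mul (hg.map^[n] g) (hg.map^[n] h) :=
  Function.Semiconj₂.iterate hg.map_mul n g h

theorem eq_one_of_iterate_map_eq_one (hker : ∀ g : G, hg.map g = hg.one → g = hg.one)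
    {n : ℕ} {g : G} (hn : hg.map^[n] g = hg.one) : g = hg.one := by
  induction n with
  | zero => exact hn
  | succ n ih => exact ih (hker _ (Function.iterate_succ_apply' hg.map n g ▸ hn))

theorem eq_one_of_map_eq_self_of_mul_self {e : G} (hmap : hg.map e = e)
    (hmul : hg.mul e e = e) : e = hg.one := by
  obtain ⟨n, hn, -⟩ := hg.exists_hom_inv e
  have mul_mul_inv : hg.mul e (hg.mul e (hg.inv e)) = hg.map (hg.mul e (hg.inv e)) :=
    calc hg.mul e (hg.mul e (hg.inv e))
      _ = hg.mul (hg.map e) (hg.mul e (hg.inv e)) := by rw [hmap]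
      _ = hg.mul (hg.mul e e) (hg.map (hg.inv e)) := hg.hom_assoc e e (hg.inv e)
      _ = hg.mul (hg.map e) (hg.map (hg.inv e)) := by rw [hmul, hmap]
      _ = hg.map (hg.mul e (hg.inv e)) := (hg.map_mul e (hg.inv e)).symm
  calc e
    _ = hg.mul e hg.one := by rw [hg.mul_one, hmap]
    _ = hg.mul (hg.map^[n] e) (hg.map^[n] (hg.mul e (hg.inv e))) := by
      rw [Function.iterate_fixed hmap, hn]
    _ = hg.map^[n] (hg.map (hg.mul e (hg.inv e))) := by rw [← hg.iterate_map_mul, mul_mul_inv]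
    _ = hg.map (hg.map^[n] (hg.mul e (hg.inv e))) :=
      (Function.Commute.refl hg.map).iterate_left n _
    _ = hg.one := by rw [hn, hg.map_one]

end

namespace IsHom

variable {G : Type u} {H : Type v} {hg : HomGroup G} {hh : HomGroup H} {f : G → H}

theorem apply_one (hf : hg.IsHom hh f) : f hg.one = hh.one := by
  apply hh.eq_one_of_map_eq_self_of_mul_self
  · rw [← hf.semiconj.eq, hg.map_one]
  · rw [← hf.apply_mul, hg.mul_one, hg.map_one]

theorem apply_mul_eq_one (hf : hg.IsHom hh f) {g k : G} (hfg : f g = hh.one)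
    (hfk : f k = hh.one) : f (hg.mul g k) = hh.one := by
  rw [hf.apply_mul, hfg, hfk, hh.mul_one, hh.map_one]

theorem exists_iterate_map_apply_inv_eq_one (hf : hg.IsHom hh f) {g : G}
    (hfg : f g = hh.one) : ∃ n : ℕ, hh.map^[n] (f (hg.inv g)) = hh.one := by
  obtain ⟨n, hn, -⟩ := hg.exists_hom_inv g
  refine ⟨n + 1, ?_⟩
  calc hh.map^[n + 1] (f (hg.inv g))
    _ = hh.map^[n] (hh.mul hh.one (f (hg.inv g))) := by
      rw [Function.iterate_succ_apply, hh.one_mul]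
    _ = hh.map^[n] (f (hg.mul g (hg.inv g))) := by rw [hf.apply_mul, hfg]
    _ = f (hg.map^[n] (hg.mul g (hg.inv g))) := (hf.semiconj.iterate_right n _).symm
    _ = hh.one := by rw [hn, hf.apply_one]

end IsHom

end HomGroup

theorem homGroup_ker_homSubgroup_general {G : Type u} {H : Type v}
    {hg : HomGroup G} {hh : HomGroup H} {f : G → H} (hf : hg.IsHom hh f)
    (hker : ∀ h : H, hh.map h = hh.one → h = hh.one) :
    hg.one ∈ {g : G | f g = hh.one} ∧
    (∀ g k : G, f g = hh.one → f k = hh.one → f (hg.mul g k) = hh.one) ∧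
    (∀ g : G, f g = hh.one → f (hg.inv g) = hh.one) := by
  refine ⟨hf.apply_one, fun _ _ => hf.apply_mul_eq_one, fun g hfg => ?_⟩
  obtain ⟨n, hn⟩ := hf.exists_iterate_map_apply_inv_eq_one hfg
  exact hh.eq_one_of_iterate_map_eq_one hker hn

/-- If `f : G → H` is a morphism of Hom-groups with `f(1_G) = 1_H` and `β`
injective, then `ker f = {g | f g = 1_H}` contains `1_G` and is closed under the
product and the inverse map of `G`; hence `(ker f, α)` is a Hom-subgroup. -/
theorem homGroup_ker_homSubgroup {G : Type u} {H : Type v}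
    (hg : HomGroup G) (hh : HomGroup H) (f : G → H)
    (hf_map : ∀ g : G, f (hg.map g) = hh.map (f g))
    (hf_mul : ∀ g k : G, f (hg.mul g k) = hh.mul (f g) (f k))
    (hf_one : f hg.one = hh.one)
    (hbeta : Function.Injective hh.map) :
    hg.one ∈ {g : G | f g = hh.one} ∧
    (∀ g k : G, f g = hh.one → f k = hh.one → f (hg.mul g k) = hh.one) ∧
    (∀ g : G, f g = hh.one → f (hg.inv g) = hh.one) :=
  homGroup_ker_homSubgroup_general ⟨hf_map, hf_mul⟩ fun _ hh_map =>
    hbeta (hh_map.trans hh.map_one.symm)
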